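/- arXiv:1805.05150 — 6 statements merged into one kernel-verified Lean document; each statement's English description precedes it below -/
import Mathlib

section
/- Under the Gutiérrez conditions, set α := min{μ₁, μ₂−μ₁} > 0. Then for every χ ∈ {0,1} and every 2×2 real matrix A = (A_ij): χ·Q₁(A) + (1−χ)·Q₂(A) ≥ −4μ₁·det(A) + χ·α[(A₁₁+A₂₂)² + (A₁₂−A₂₁)²] + (1−χ)·α[(A₁₁−A₂₂)² + A₁₂² + A₂₁²]. -/
/-- The isotropic elasticity quadratic form on 2×2 real matrices with Lamé
parameters `lam`, `mu`: `Q_{λ,μ}(A) = (λ+2μ)(A₁₁²+A₂₂²) + 2λA₁₁A₂₂ + μ(A₁₂+A₂₁)²`. -/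
def isoQ (lam mu : ℝ) (A : Matrix (Fin 2) (Fin 2) ℝ) : ℝ :=
  (lam + 2 * mu) * ((A 0 0) ^ 2 + (A 1 1) ^ 2) + 2 * lam * (A 0 0 * A 1 1)
    + mu * (A 0 1 + A 1 0) ^ 2

/-- The determinant of a 2×2 real matrix. -/
def det2 (A : Matrix (Fin 2) (Fin 2) ℝ) : ℝ := A 0 0 * A 1 1 - A 0 1 * A 1 0

theorem stmt_2 (lam1 mu1 lam2 mu2 : ℝ)
    (h1 : 0 < mu1) (h2 : mu1 = -(lam2 + mu2)) (h3 : mu1 < mu2)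
    (h4 : 0 < lam1 + mu1)
    (α : ℝ) (hα : α = min mu1 (mu2 - mu1))
    (χ : ℝ) (hχ : χ = 0 ∨ χ = 1)
    (A : Matrix (Fin 2) (Fin 2) ℝ) :
    χ * isoQ lam1 mu1 A + (1 - χ) * isoQ lam2 mu2 A
      ≥ -(4 * mu1) * det2 A
        + χ * α * ((A 0 0 + A 1 1) ^ 2 + (A 0 1 - A 1 0) ^ 2)
        + (1 - χ) * α * ((A 0 0 - A 1 1) ^ 2 + (A 0 1) ^ 2 + (A 1 0) ^ 2) := by
  have hα1 : α ≤ mu1 := hα ▸ min_le_left _ _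
  have hα2 : α ≤ mu2 - mu1 := hα ▸ min_le_right _ _
  have hα0 : 0 ≤ α := hα ▸ le_min h1.le (sub_nonneg.mpr h3.le)
  obtain rfl : lam2 = -mu1 - mu2 := by linarith
  unfold isoQ det2
  generalize A 0 0 = a, A 0 1 = b, A 1 0 = c, A 1 1 = d
  rcases hχ with rfl | rfl
  · have had := mul_le_mul_of_nonneg_right hα2 (sq_nonneg (a - d))
    have hbc := mul_le_mul_of_nonneg_right hα2 (sq_nonneg (b + c))
    have hbc' := mul_le_mul_of_nonneg_right hα1 (sq_nonneg (b - c))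
    have hpos := mul_nonneg hα0 (add_nonneg (sq_nonneg b) (sq_nonneg c))
    linarith
  · have had := mul_le_mul_of_nonneg_right (show α ≤ lam1 + 2 * mu1 by linarith)
      (sq_nonneg (a + d))
    have hbc := mul_le_mul_of_nonneg_right hα1 (sq_nonneg (b - c))
    linarith
end

section
/- Under the Gutiérrez conditions, for each i ∈ {1,2} the function A ↦ Qᵢ(A) + 4μ₁·det(A) on 2×2 real matrices is nonnegative, and it is convex. -/
/-- Decomposition of `Q_{λ,μ} + 4m det` into squares. -/
theorem isoQ_add_det2_eq (lam mu m : ℝ) (A : Matrix (Fin 2) (Fin 2) ℝ) :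
    isoQ lam mu A + 4 * m * det2 A =
      (lam + mu + m) * (A 0 0 + A 1 1) ^ 2 + (mu - m) * (A 0 0 - A 1 1) ^ 2
        + (mu - m) * (A 0 1 + A 1 0) ^ 2 + m * (A 0 1 - A 1 0) ^ 2 := by
  unfold isoQ det2
  ring

theorem isoQ_add_det2_nonneg {lam mu m : ℝ} (hm : 0 ≤ m) (hmu : m ≤ mu)
    (hlam : 0 ≤ lam + mu + m) (A : Matrix (Fin 2) (Fin 2) ℝ) :
    0 ≤ isoQ lam mu A + 4 * m * det2 A := by
  have hsub : 0 ≤ mu - m := sub_nonneg.mpr hmu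
  rw [isoQ_add_det2_eq]
  positivity

theorem convexOn_isoQ_add_det2 {lam mu m : ℝ} (hm : 0 ≤ m) (hmu : m ≤ mu)
    (hlam : 0 ≤ lam + mu + m) :
    ConvexOn ℝ Set.univ
      (fun A : Matrix (Fin 2) (Fin 2) ℝ => isoQ lam mu A + 4 * m * det2 A) := by
  refine ⟨convex_univ, fun A _ B _ s t hs ht hst => ?_⟩
  have hdiff := mul_nonneg (mul_nonneg hs ht) (isoQ_add_det2_nonneg hm hmu hlam (A - B))
  obtain rfl : t = 1 - s := by linarith
  simp only [isoQ, det2, Matrix.sub_apply, Matrix.add_apply, Matrix.smul_apply,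
    smul_eq_mul] at hdiff ⊢
  linarith

theorem stmt_3 (lam1 mu1 lam2 mu2 : ℝ)
    (h1 : 0 < mu1) (h2 : mu1 = -(lam2 + mu2)) (h3 : mu1 < mu2)
    (h4 : 0 < lam1 + mu1) :
    (∀ A : Matrix (Fin 2) (Fin 2) ℝ, 0 ≤ isoQ lam1 mu1 A + 4 * mu1 * det2 A) ∧
    ConvexOn ℝ Set.univ
      (fun A : Matrix (Fin 2) (Fin 2) ℝ => isoQ lam1 mu1 A + 4 * mu1 * det2 A) ∧
    (∀ A : Matrix (Fin 2) (Fin 2) ℝ, 0 ≤ isoQ lam2 mu2 A + 4 * mu1 * det2 A) ∧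
    ConvexOn ℝ Set.univ
      (fun A : Matrix (Fin 2) (Fin 2) ℝ => isoQ lam2 mu2 A + 4 * mu1 * det2 A) := by
  have hlam1 : 0 ≤ lam1 + mu1 + mu1 := by linarith
  have hlam2 : 0 ≤ lam2 + mu2 + mu1 := by linarith
  exact ⟨isoQ_add_det2_nonneg h1.le le_rfl hlam1, convexOn_isoQ_add_det2 h1.le le_rfl hlam1,
    isoQ_add_det2_nonneg h1.le h3.le hlam2, convexOn_isoQ_add_det2 h1.le h3.le hlam2⟩
end

section
/- Let u : ℝ² → ℝ² be continuously differentiable with compact support. Then the determinant of the Jacobian is a null Lagrangian: ∫_{ℝ²} det(Du(x)) dx = 0. -/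
open MeasureTheory

/-- The Jacobian matrix of a map `u : ℝ² → ℝ²` at `x`: `(jac u x) i j = ∂ⱼ uⁱ (x)`. -/
noncomputable def jac (u : (Fin 2 → ℝ) → (Fin 2 → ℝ)) (x : Fin 2 → ℝ) : Matrix (Fin 2) (Fin 2) ℝ :=
  Matrix.of fun i j => fderiv ℝ u x (Pi.single j 1) i

section NullLagrangian

variable {E : Type*} [NormedAddCommGroup E] [NormedSpace ℝ E] [FiniteDimensional ℝ E]
  [MeasurableSpace E] [BorelSpace E] {μ : Measure E} [μ.IsAddHaarMeasure] {f g : E → ℝ}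

/-- Integration by parts for `C¹` functions, one of which has compact support. -/
theorem integral_mul_fderiv_eq_neg_of_hasCompactSupport (hf : ContDiff ℝ 1 f)
    (hg : ContDiff ℝ 1 g) (hg' : HasCompactSupport g) (v : E) :
    ∫ x, f x * fderiv ℝ g x v ∂μ = -∫ x, fderiv ℝ f x v * g x ∂μ := by
  have hDf : Continuous fun x => fderiv ℝ f x v :=
    (hf.continuous_fderiv one_ne_zero).clm_apply continuous_const
  have hDg : Continuous fun x => fderiv ℝ g x v :=
    (hg.continuous_fderiv one_ne_zero).clm_apply continuous_const
  exact integral_mul_fderiv_eq_neg_fderiv_mul_of_integrable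
    ((hDf.mul hg.continuous).integrable_of_hasCompactSupport hg'.mul_left)
    ((hf.continuous.mul hDg).integrable_of_hasCompactSupport (hg'.fderiv_apply ℝ v).mul_left)
    ((hf.continuous.mul hg.continuous).integrable_of_hasCompactSupport hg'.mul_left)
    (fun x _ => hf.differentiable one_ne_zero x) (fun x _ => hg.differentiable one_ne_zero x)

/-- Moving a translation and a derivative from one factor to the other. -/
theorem integral_comp_add_mul_fderiv (hf : ContDiff ℝ 1 f) (hg : ContDiff ℝ 1 g)
    (hg' : HasCompactSupport g) (a w : E) :
    ∫ x, f (x + a) * fderiv ℝ g x w ∂μ = -∫ x, fderiv ℝ f x w * g (x - a) ∂μ := by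
  rw [← integral_mul_fderiv_eq_neg_of_hasCompactSupport (g := fun x => g (x - a)) hf
    (hg.comp (contDiff_id.sub contDiff_const))
    (hg'.comp_homeomorph (Homeomorph.subRight a)),
    ← integral_add_right_eq_self (fun x => f x * fderiv ℝ (fun x => g (x - a)) x w) a]
  simp [fderiv_comp_sub]

/-- The bilinear form `(f, g) ↦ ∫ ∂ᵥf ∂_w g` on compactly supported `C¹` functions is symmetric
in the directions `v` and `w`. -/
theorem integral_fderiv_mul_fderiv_swap (hf : ContDiff ℝ 1 f) (hf' : HasCompactSupport f)
    (hg : ContDiff ℝ 1 g) (hg' : HasCompactSupport g) (v w : E) :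
    ∫ x, fderiv ℝ f x v * fderiv ℝ g x w ∂μ = ∫ x, fderiv ℝ f x w * fderiv ℝ g x v ∂μ := by
  -- Replace `∂ᵥ` by a difference quotient, exchange it with `∂_w`, and pass to the limit.
  have hDf : Continuous fun x => fderiv ℝ f x w :=
    (hf.continuous_fderiv one_ne_zero).clm_apply continuous_const
  have hDg : Continuous fun x => fderiv ℝ g x w :=
    (hg.continuous_fderiv one_ne_zero).clm_apply continuous_const
  have hDf' : HasCompactSupport fun x => fderiv ℝ f x w := hf'.fderiv_apply ℝ w
  have hDg' : HasCompactSupport fun x => fderiv ℝ g x w := hg'.fderiv_apply ℝ w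
  obtain ⟨C, hC⟩ := hf.lipschitzWith_of_hasCompactSupport hf' one_ne_zero
  obtain ⟨D, hD⟩ := hg.lipschitzWith_of_hasCompactSupport hg' one_ne_zero
  have hlim_f := hC.integral_inv_smul_sub_mul_tendsto_integral_lineDeriv_mul (μ := μ)
    (hDg.integrable_of_hasCompactSupport hDg') v
  have hlim_g := (hD.integral_inv_smul_sub_mul_tendsto_integral_lineDeriv_mul (μ := μ)
    (hDf.integrable_of_hasCompactSupport hDf') (-v)).neg
  have hquot (t : ℝ) : ∫ x, (t⁻¹ • (f (x + t • v) - f x)) * fderiv ℝ g x w ∂μ =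
      -∫ x, (t⁻¹ • (g (x + t • -v) - g x)) * fderiv ℝ f x w ∂μ := by
    have hfa : Integrable (fun x => f (x + t • v) * fderiv ℝ g x w) μ :=
      ((hf.continuous.comp (continuous_add_const _)).mul hDg).integrable_of_hasCompactSupport
        hDg'.mul_left
    have hf0 : Integrable (fun x => f x * fderiv ℝ g x w) μ :=
      (hf.continuous.mul hDg).integrable_of_hasCompactSupport hDg'.mul_left
    have hga : Integrable (fun x => fderiv ℝ f x w * g (x - t • v)) μ :=
      (hDf.mul (hg.continuous.comp (continuous_sub_right _))).integrable_of_hasCompactSupport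
        hDf'.mul_right
    have hg0 : Integrable (fun x => fderiv ℝ f x w * g x) μ :=
      (hDf.mul hg.continuous).integrable_of_hasCompactSupport hDf'.mul_right
    calc _ = t⁻¹ * ∫ x, (f (x + t • v) * fderiv ℝ g x w - f x * fderiv ℝ g x w) ∂μ := by
          rw [← integral_const_mul]; congr with x; simp only [smul_eq_mul]; ring
      _ = -(t⁻¹ * ∫ x, (fderiv ℝ f x w * g (x - t • v) - fderiv ℝ f x w * g x) ∂μ) := by
          rw [integral_sub hfa hf0, integral_sub hga hg0, integral_comp_add_mul_fderiv hf hg hg',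
            integral_mul_fderiv_eq_neg_of_hasCompactSupport hf hg hg']
          ring
      _ = _ := by
          rw [← integral_const_mul]
          congr with x
          simp only [smul_eq_mul, smul_neg, ← sub_eq_add_neg]
          ring
  have key := tendsto_nhds_unique (hlim_f.congr hquot) hlim_g
  simp_rw [(hf.differentiable one_ne_zero _).lineDeriv_eq_fderiv,
    (hg.differentiable one_ne_zero _).lineDeriv_eq_fderiv, map_neg, neg_mul, integral_neg,
    neg_neg] at key
  simpa only [mul_comm] using key

end NullLagrangian

theorem stmt_7 (u : (Fin 2 → ℝ) → (Fin 2 → ℝ))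
    (hu : ContDiff ℝ 1 u) (hsupp : HasCompactSupport u) :
    ∫ x : Fin 2 → ℝ, det2 (jac u x) = 0 := by
  have hC (i : Fin 2) : ContDiff ℝ 1 fun x => u x i := contDiff_pi.1 hu i
  have hK (i : Fin 2) : HasCompactSupport fun x => u x i :=
    hsupp.comp_left (g := fun y : Fin 2 → ℝ => y i) rfl
  have hD (x v : Fin 2 → ℝ) (i : Fin 2) : fderiv ℝ u x v i = fderiv ℝ (fun x => u x i) x v := by
    rw [fderiv_pi fun i => (hC i).differentiable one_ne_zero x]; rfl
  have hint (v w : Fin 2 → ℝ) : Integrable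
      (fun x => fderiv ℝ (fun x => u x 0) x v * fderiv ℝ (fun x => u x 1) x w) :=
    ((((hC 0).continuous_fderiv one_ne_zero).clm_apply continuous_const).mul
      (((hC 1).continuous_fderiv one_ne_zero).clm_apply
        continuous_const)).integrable_of_hasCompactSupport
      ((hK 1).fderiv_apply ℝ w).mul_left
  simp only [det2, jac, Matrix.of_apply, hD]
  rw [integral_sub (hint _ _) (hint _ _),
    integral_fderiv_mul_fderiv_swap (hC 0) (hK 0) (hC 1) (hK 1), sub_self]
end

section
/- (Λ ≥ 0, per realization.) Assume the Gutiérrez conditions and let χ : ℝ² → {0,1} be measurable. Then for every continuously differentiable u : ℝ² → ℝ² with compact support, ∫_{ℝ²} [χ(x)·Q₁(Du(x)) + (1−χ(x))·Q₂(Du(x))] dx ≥ 0. -/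
open MeasureTheory

/-- Completing squares: adding `4 k det A` to `isoQ` gives a diagonal form. -/
lemma isoQ_add_det (lam mu k : ℝ) (A : Matrix (Fin 2) (Fin 2) ℝ) :
    isoQ lam mu A + 4 * k * A.det =
      (lam + mu + k) * (A 0 0 + A 1 1) ^ 2 + (mu - k) * (A 0 0 - A 1 1) ^ 2
        + (mu - k) * (A 0 1 + A 1 0) ^ 2 + k * (A 0 1 - A 1 0) ^ 2 := by
  rw [isoQ, Matrix.det_fin_two]
  ring

section

variable {E : Type*} [NormedAddCommGroup E] [NormedSpace ℝ E] {f g : E → ℝ}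

lemma ContDiff.continuous_fderiv_apply_const (hf : ContDiff ℝ 1 f) (v : E) :
    Continuous fun x => fderiv ℝ f x v :=
  (hf.continuous_fderiv one_ne_zero).clm_apply continuous_const

variable [FiniteDimensional ℝ E] [MeasurableSpace E] [BorelSpace E]
  {μ : Measure E} [μ.IsAddHaarMeasure]

/-- For a compactly supported `C¹` function, a difference quotient in direction `w` and a
derivative in direction `v` may be exchanged inside the integral. -/
lemma integral_differenceQuotient_mul_fderiv (hf : ContDiff ℝ 1 f) (hg : ContDiff ℝ 1 g)
    (hfs : HasCompactSupport f) (hgs : HasCompactSupport g) (v w : E) (t : ℝ) :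
    ∫ x, (t⁻¹ • (g (x + t • w) - g x)) * fderiv ℝ f x v ∂μ =
      -∫ x, (t⁻¹ • (f (x + t • -w) - f x)) * fderiv ℝ g x v ∂μ := by
  have hf' := hf.continuous_fderiv_apply_const v
  have hg' := hg.continuous_fderiv_apply_const v
  have hfc := hf.continuous
  have hgc := hg.continuous
  have hfs' : HasCompactSupport fun x => fderiv ℝ f x v := hfs.fderiv_apply ℝ v
  have hd : Differentiable ℝ fun x => g (x + t • w) :=
    (hg.differentiable one_ne_zero).comp (differentiable_id.add_const _)
  have hfd (x : E) : fderiv ℝ (fun x => g (x + t • w)) x = fderiv ℝ g (x + t • w) := by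
    rw [fderiv_comp_add_right]
  have hshift : ∫ x, g (x + t • w) * fderiv ℝ f x v ∂μ =
      -∫ x, fderiv ℝ g (x + t • w) v * f x ∂μ := by
    rw [integral_mul_fderiv_eq_neg_fderiv_mul_of_integrable _ _ _ (fun x _ => hd x)
      (fun x _ => hf.differentiable one_ne_zero x)]
    · simp only [hfd]
    · simp only [hfd]
      exact Continuous.integrable_of_hasCompactSupport (by fun_prop) hfs.mul_left
    · exact Continuous.integrable_of_hasCompactSupport (by fun_prop) hfs'.mul_left
    · exact Continuous.integrable_of_hasCompactSupport (by fun_prop) hfs.mul_left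
  have hzero : ∫ x, g x * fderiv ℝ f x v ∂μ = -∫ x, fderiv ℝ g x v * f x ∂μ := by
    refine integral_mul_fderiv_eq_neg_fderiv_mul_of_integrable ?_ ?_ ?_
      (fun x _ => hg.differentiable one_ne_zero x) (fun x _ => hf.differentiable one_ne_zero x)
    · exact Continuous.integrable_of_hasCompactSupport (by fun_prop) hfs.mul_left
    · exact Continuous.integrable_of_hasCompactSupport (by fun_prop) hfs'.mul_left
    · exact Continuous.integrable_of_hasCompactSupport (by fun_prop) hfs.mul_left
  have htrans : ∫ x, fderiv ℝ g (x + t • w) v * f x ∂μ =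
      ∫ x, f (x + t • -w) * fderiv ℝ g x v ∂μ := by
    rw [← integral_add_right_eq_self (fun x => f (x + t • -w) * fderiv ℝ g x v) (t • w)]
    refine integral_congr_ae (.of_forall fun x => ?_)
    simp [mul_comm]
  have hgs' : HasCompactSupport fun x => fderiv ℝ g x v := hgs.fderiv_apply ℝ v
  simp only [smul_eq_mul, mul_assoc, integral_const_mul, sub_mul]
  rw [integral_sub, integral_sub, hshift, hzero, htrans]
  · simp only [mul_comm (f _)]
    ring
  · exact Continuous.integrable_of_hasCompactSupport (by fun_prop) hgs'.mul_left
  · exact Continuous.integrable_of_hasCompactSupport (by fun_prop) hgs'.mul_left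
  · exact Continuous.integrable_of_hasCompactSupport (by fun_prop) hfs'.mul_left
  · exact Continuous.integrable_of_hasCompactSupport (by fun_prop) hfs'.mul_left

/-- The null Lagrangian identity for compactly supported `C¹` functions. -/
lemma integral_fderiv_mul_fderiv_comm (hf : ContDiff ℝ 1 f) (hg : ContDiff ℝ 1 g)
    (hfs : HasCompactSupport f) (hgs : HasCompactSupport g) (v w : E) :
    ∫ x, fderiv ℝ f x v * fderiv ℝ g x w ∂μ = ∫ x, fderiv ℝ f x w * fderiv ℝ g x v ∂μ := by
  obtain ⟨C, hC⟩ := ContDiff.lipschitzWith_of_hasCompactSupport hfs hf one_ne_zero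
  obtain ⟨D, hD⟩ := ContDiff.lipschitzWith_of_hasCompactSupport hgs hg one_ne_zero
  have hfi : Integrable (fun x => fderiv ℝ f x v) μ :=
    (hf.continuous_fderiv_apply_const v).integrable_of_hasCompactSupport (hfs.fderiv_apply ℝ v)
  have hgi : Integrable (fun x => fderiv ℝ g x v) μ :=
    (hg.continuous_fderiv_apply_const v).integrable_of_hasCompactSupport (hgs.fderiv_apply ℝ v)
  have hleft := hD.integral_inv_smul_sub_mul_tendsto_integral_lineDeriv_mul hfi w
  have hright := (hC.integral_inv_smul_sub_mul_tendsto_integral_lineDeriv_mul hgi (-w)).neg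
  simp only [integral_differenceQuotient_mul_fderiv hf hg hfs hgs v w] at hleft
  have heq := tendsto_nhds_unique hleft hright
  simp only [fun x z => (hf.differentiable one_ne_zero x).lineDeriv_eq_fderiv (v := z),
    fun x z => (hg.differentiable one_ne_zero x).lineDeriv_eq_fderiv (v := z), map_neg, neg_mul,
    integral_neg, neg_neg] at heq
  simpa only [mul_comm] using heq

end

section

variable {u : (Fin 2 → ℝ) → (Fin 2 → ℝ)}

lemma jac_apply (hu : Differentiable ℝ u) (x : Fin 2 → ℝ) (i j : Fin 2) :
    jac u x i j = fderiv ℝ (fun y => u y i) x (Pi.single j 1) := by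
  rw [jac, Matrix.of_apply, fderiv_apply (hu x)]
  rfl

lemma continuous_jac (hu : ContDiff ℝ 1 u) : Continuous (jac u) := by
  refine continuous_matrix fun i j => ?_
  exact (continuous_apply i).comp
    ((hu.continuous_fderiv one_ne_zero).clm_apply continuous_const)

lemma hasCompactSupport_jac (hsupp : HasCompactSupport u) : HasCompactSupport (jac u) := by
  refine (hsupp.fderiv ℝ).comp_left
    (g := fun L : (Fin 2 → ℝ) →L[ℝ] (Fin 2 → ℝ) =>
      Matrix.of fun i j => L (Pi.single j 1) i) ?_
  ext i j
  simp

/-- The Jacobian determinant of a compactly supported `C¹` planar map has zero integral. -/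
lemma integral_det_jac (hu : ContDiff ℝ 1 u) (hsupp : HasCompactSupport u) :
    ∫ x, (jac u x).det = 0 := by
  have hc (i : Fin 2) : ContDiff ℝ 1 fun x => u x i := contDiff_pi.1 hu i
  have hs (i : Fin 2) : HasCompactSupport fun x => u x i :=
    hsupp.comp_left (g := fun y : Fin 2 → ℝ => y i) rfl
  have hi (j k : Fin 2) : Integrable fun x => fderiv ℝ (fun y => u y 0) x (Pi.single j 1) *
      fderiv ℝ (fun y => u y 1) x (Pi.single k 1) :=
    (((hc 0).continuous_fderiv_apply_const _).mul
      ((hc 1).continuous_fderiv_apply_const _)).integrable_of_hasCompactSupport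
      ((hs 1).fderiv_apply ℝ _).mul_left
  simp only [Matrix.det_fin_two, jac_apply (hu.differentiable one_ne_zero)]
  rw [integral_sub (hi 0 1) (hi 1 0), sub_eq_zero]
  exact integral_fderiv_mul_fderiv_comm (hc 0) (hc 1) (hs 0) (hs 1) _ _

lemma integrable_isoQ_jac (hu : ContDiff ℝ 1 u) (hsupp : HasCompactSupport u) (lam mu : ℝ) :
    Integrable fun x => isoQ lam mu (jac u x) := by
  refine Continuous.integrable_of_hasCompactSupport ?_
    ((hasCompactSupport_jac hsupp).comp_left (g := isoQ lam mu) (by simp [isoQ]))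
  have := continuous_jac hu
  unfold isoQ
  fun_prop

lemma integrable_det_jac (hu : ContDiff ℝ 1 u) (hsupp : HasCompactSupport u) :
    Integrable fun x => (jac u x).det :=
  (continuous_jac hu).matrix_det.integrable_of_hasCompactSupport
    ((hasCompactSupport_jac hsupp).comp_left (g := Matrix.det) (by simp))

end

theorem stmt_8 (lam1 mu1 lam2 mu2 : ℝ)
    (h1 : 0 < mu1) (h2 : mu1 = -(lam2 + mu2)) (h3 : mu1 < mu2)
    (h4 : 0 < lam1 + mu1)
    (χ : (Fin 2 → ℝ) → ℝ) (hχmeas : Measurable χ) (hχ : ∀ x, χ x = 0 ∨ χ x = 1)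
    (u : (Fin 2 → ℝ) → (Fin 2 → ℝ))
    (hu : ContDiff ℝ 1 u) (hsupp : HasCompactSupport u) :
    0 ≤ ∫ x : Fin 2 → ℝ,
      (χ x * isoQ lam1 mu1 (jac u x) + (1 - χ x) * isoQ lam2 mu2 (jac u x)) := by
  have hint : Integrable fun x =>
      χ x * isoQ lam1 mu1 (jac u x) + (1 - χ x) * isoQ lam2 mu2 (jac u x) := by
    refine ((integrable_isoQ_jac hu hsupp lam1 mu1).bdd_mul (c := 1)
      hχmeas.aestronglyMeasurable (.of_forall fun x => ?_)).add
      ((integrable_isoQ_jac hu hsupp lam2 mu2).bdd_mul (c := 1)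
      (hχmeas.const_sub 1).aestronglyMeasurable (.of_forall fun x => ?_))
    all_goals rcases hχ x with h | h <;> simp [h]
  have hdet : ∫ x, 4 * mu1 * (jac u x).det = 0 := by
    rw [integral_const_mul, integral_det_jac hu hsupp, mul_zero]
  have hadd := integral_add hint ((integrable_det_jac hu hsupp).const_mul (4 * mu1))
  rw [hdet, add_zero] at hadd
  rw [← hadd]
  refine integral_nonneg fun x => ?_
  have hQ1 : 0 ≤ isoQ lam1 mu1 (jac u x) + 4 * mu1 * (jac u x).det := by
    rw [isoQ_add_det, sub_self]
    have : 0 ≤ lam1 + mu1 + mu1 := by linarith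
    positivity
  have hQ2 : 0 ≤ isoQ lam2 mu2 (jac u x) + 4 * mu1 * (jac u x).det := by
    rw [isoQ_add_det, show lam2 + mu2 + mu1 = 0 by linarith]
    have : 0 ≤ mu2 - mu1 := by linarith
    positivity
  rcases hχ x with h | h
  · simpa [h] using hQ2
  · simpa [h] using hQ1
end

section
/- Let U ⊆ ℝ² be open and connected and let ψ : ℝ² → ℝ be twice continuously differentiable on U. Suppose that on U the mixed second partial derivatives vanish, ∂₁∂₂ψ = ∂₂∂₁ψ = 0, and the pure second partial derivatives agree, ∂₁∂₁ψ = ∂₂∂₂ψ. Then there exist real constants a, b, c, d such that ψ(y) = a(y₁² + y₂²) + b y₁ + c y₂ + d for all y ∈ U. -/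
/-- The `j`-th partial derivative of `ψ : ℝ² → ℝ` (direction `e_j`). -/
noncomputable def pderiv2 (j : Fin 2) (ψ : (Fin 2 → ℝ) → ℝ) (x : Fin 2 → ℝ) : ℝ :=
  fderiv ℝ ψ x (Pi.single j 1)

open Set Metric Filter Topology

/-- A continuous linear form on `ℝ²` is determined by its values on the standard basis. -/
lemma clm_eq_smul_proj (L : (Fin 2 → ℝ) →L[ℝ] ℝ) :
    L = L (Pi.single 0 1) • ContinuousLinearMap.proj (R := ℝ) (φ := fun _ : Fin 2 => ℝ) 0 +
      L (Pi.single 1 1) • ContinuousLinearMap.proj (R := ℝ) (φ := fun _ : Fin 2 => ℝ) 1 := by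
  ext v
  have hv : v = v 0 • Pi.single 0 1 + v 1 • Pi.single 1 1 := by
    ext i; fin_cases i <;> simp
  conv_lhs => rw [hv]
  simp only [map_add, map_smul, add_apply, smul_apply,
    ContinuousLinearMap.proj_apply, smul_eq_mul]
  ring

/-- A differentiable function on a connected open set of `ℝ²` whose partial derivatives are those
of `g` differs from `g` by a constant. -/
lemma exists_eq_add_const_of_pderiv2_eq {U : Set (Fin 2 → ℝ)} (hU : IsOpen U)
    (hUc : IsPreconnected U) {f g : (Fin 2 → ℝ) → ℝ} (hf : DifferentiableOn ℝ f U)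
    (hg : DifferentiableOn ℝ g U) (h0 : ∀ y ∈ U, pderiv2 0 f y = pderiv2 0 g y)
    (h1 : ∀ y ∈ U, pderiv2 1 f y = pderiv2 1 g y) :
    ∃ c : ℝ, ∀ y ∈ U, f y = g y + c := by
  obtain ⟨c, hc⟩ := hU.exists_eq_add_of_fderiv_eq hUc hf hg (fun y hy => by
    rw [clm_eq_smul_proj (fderiv ℝ f y), clm_eq_smul_proj (fderiv ℝ g y)]
    have e0 := h0 y hy
    have e1 := h1 y hy
    unfold pderiv2 at e0 e1
    rw [e0, e1])
  exact ⟨c, hc⟩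

/-- If the derivative of `f` along `v` vanishes on a ball, then the derivative of `f` is invariant
under translations along `v` inside this ball. -/
lemma fderiv_add_smul_eq_of_fderiv_apply_eq_zero {E : Type*} [NormedAddCommGroup E]
    [NormedSpace ℝ E] {f : E → ℝ} {x v : E} {r : ℝ} (hf : DifferentiableOn ℝ f (ball x r))
    (hv : ∀ y ∈ ball x r, fderiv ℝ f y v = 0) {y : E} {t : ℝ} (hy : y ∈ ball x r)
    (hyt : y + t • v ∈ ball x r) : fderiv ℝ f (y + t • v) = fderiv ℝ f y := by
  rw [← fderiv_comp_add_right]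
  apply EventuallyEq.fderiv_eq
  have hcont : Tendsto (fun w : E => w + t • v) (𝓝 y) (𝓝 (y + t • v)) :=
    (continuous_id.add continuous_const).tendsto y
  filter_upwards [isOpen_ball.mem_nhds hy, hcont (isOpen_ball.mem_nhds hyt)] with w hw hwt
  obtain ⟨z, hz, hzeq⟩ := domain_mvt (f := f) (f' := fun z => fderiv ℝ f z)
    (fun z hz => ((hf.differentiableAt (isOpen_ball.mem_nhds hz)).hasFDerivAt).hasFDerivWithinAt)
    (convex_ball x r) hw hwt
  have hzb := (convex_ball x r).segment_subset hw hwt hz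
  simp only [add_sub_cancel_left, map_smul, hv z hzb, smul_zero] at hzeq
  linarith

/-- If `p` depends locally only on the first variable, `q` only on the second one, and
`∂₁p = ∂₂q`, then `∂₁p` is constant on each ball. -/
lemma pderiv2_eq_of_mem_ball {p q : (Fin 2 → ℝ) → ℝ} {x : Fin 2 → ℝ} {r : ℝ}
    (hp : DifferentiableOn ℝ p (ball x r)) (hq : DifferentiableOn ℝ q (ball x r))
    (hp1 : ∀ y ∈ ball x r, pderiv2 1 p y = 0) (hq0 : ∀ y ∈ ball x r, pderiv2 0 q y = 0)
    (hpq : ∀ y ∈ ball x r, pderiv2 0 p y = pderiv2 1 q y) {z : Fin 2 → ℝ} (hz : z ∈ ball x r) :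
    pderiv2 0 p z = pderiv2 0 p x := by
  have hr : 0 < r := pos_of_mem_ball hz
  have hx : x ∈ ball x r := mem_ball_self hr
  have hw : x + (z 1 - x 1) • Pi.single 1 1 ∈ ball x r := by
    rw [mem_ball, dist_pi_lt_iff hr] at hz ⊢
    intro i
    have h1 := hz 1
    fin_cases i
    · simpa using hr
    · simpa using h1
  have hzw : x + (z 1 - x 1) • Pi.single 1 1 + (z 0 - x 0) • Pi.single 0 1 = z := by
    ext i; fin_cases i <;> simp
  have e1 := fderiv_add_smul_eq_of_fderiv_apply_eq_zero hp hp1 hx hw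
  have e2 := fderiv_add_smul_eq_of_fderiv_apply_eq_zero hq hq0 hw (hzw.symm ▸ hz)
  rw [hzw] at e2
  have e3 := hpq _ hw
  rw [hpq z hz]
  unfold pderiv2 at e3 ⊢
  rw [e2, ← e3, e1]

lemma differentiableOn_pderiv2 {U : Set (Fin 2 → ℝ)} (hU : IsOpen U) {ψ : (Fin 2 → ℝ) → ℝ}
    (hψ : ContDiffOn ℝ 2 ψ U) (j : Fin 2) : DifferentiableOn ℝ (pderiv2 j ψ) U :=
  ((hψ.fderiv_of_isOpen (m := 1) hU (by norm_num)).differentiableOn one_ne_zero).clm_apply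
    (differentiableOn_const _)

lemma hasFDerivAt_quadratic (a b c : ℝ) (y : Fin 2 → ℝ) :
    HasFDerivAt (fun y : Fin 2 → ℝ => a * ((y 0) ^ 2 + (y 1) ^ 2) + b * y 0 + c * y 1)
      ((2 * a * y 0 + b) • ContinuousLinearMap.proj (R := ℝ) (φ := fun _ : Fin 2 => ℝ) 0 +
      (2 * a * y 1 + c) • ContinuousLinearMap.proj (R := ℝ) (φ := fun _ : Fin 2 => ℝ) 1) y := by
  have h0 := hasFDerivAt_apply (𝕜 := ℝ) (0 : Fin 2) y
  have h1 := hasFDerivAt_apply (𝕜 := ℝ) (1 : Fin 2) y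
  refine (((((h0.pow 2).add (h1.pow 2)).const_mul a).add (h0.const_mul b)).add
    (h1.const_mul c)).congr_fderiv ?_
  ext v
  simp
  ring

lemma differentiable_quadratic (a b c : ℝ) :
    Differentiable ℝ (fun y : Fin 2 → ℝ => a * ((y 0) ^ 2 + (y 1) ^ 2) + b * y 0 + c * y 1) :=
  fun y => (hasFDerivAt_quadratic a b c y).differentiableAt

lemma pderiv2_zero_quadratic (a b c : ℝ) (y : Fin 2 → ℝ) :
    pderiv2 0 (fun y : Fin 2 → ℝ => a * ((y 0) ^ 2 + (y 1) ^ 2) + b * y 0 + c * y 1) y =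
      2 * a * y 0 + b := by
  simp [pderiv2, (hasFDerivAt_quadratic a b c y).fderiv]

lemma pderiv2_one_quadratic (a b c : ℝ) (y : Fin 2 → ℝ) :
    pderiv2 1 (fun y : Fin 2 → ℝ => a * ((y 0) ^ 2 + (y 1) ^ 2) + b * y 0 + c * y 1) y =
      2 * a * y 1 + c := by
  simp [pderiv2, (hasFDerivAt_quadratic a b c y).fderiv]

theorem stmt_13 (U : Set (Fin 2 → ℝ)) (hUopen : IsOpen U) (hUconn : IsConnected U)
    (ψ : (Fin 2 → ℝ) → ℝ) (hψ : ContDiffOn ℝ 2 ψ U)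
    (h12 : ∀ y ∈ U, pderiv2 0 (pderiv2 1 ψ) y = 0)
    (h21 : ∀ y ∈ U, pderiv2 1 (pderiv2 0 ψ) y = 0)
    (h1122 : ∀ y ∈ U, pderiv2 0 (pderiv2 0 ψ) y = pderiv2 1 (pderiv2 1 ψ) y) :
    ∃ a b c d : ℝ, ∀ y ∈ U,
      ψ y = a * ((y 0) ^ 2 + (y 1) ^ 2) + b * y 0 + c * y 1 + d := by
  have hUpre := hUconn.isPreconnected
  have hp := differentiableOn_pderiv2 hUopen hψ 0
  have hq := differentiableOn_pderiv2 hUopen hψ 1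
  have hloc : ∀ x ∈ U, HasFDerivAt (pderiv2 0 (pderiv2 0 ψ)) (0 : (Fin 2 → ℝ) →L[ℝ] ℝ) x := by
    intro x hx
    obtain ⟨r, hr, hball⟩ := Metric.isOpen_iff.1 hUopen x hx
    refine (hasFDerivAt_const (pderiv2 0 (pderiv2 0 ψ) x) x).congr_of_eventuallyEq ?_
    filter_upwards [ball_mem_nhds x hr] with z hz
    exact pderiv2_eq_of_mem_ball (hp.mono hball) (hq.mono hball) (fun y hy => h21 y (hball hy))
      (fun y hy => h12 y (hball hy)) (fun y hy => h1122 y (hball hy)) hz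
  obtain ⟨l, hl⟩ := hUopen.exists_is_const_of_fderiv_eq_zero hUpre
    (fun x hx => (hloc x hx).differentiableAt.differentiableWithinAt)
    (fun x hx => (hloc x hx).fderiv)
  obtain ⟨b, hb⟩ := exists_eq_add_const_of_pderiv2_eq hUopen hUpre hp
    (differentiable_quadratic 0 l 0).differentiableOn
    (fun y hy => by rw [pderiv2_zero_quadratic, hl y hy]; ring)
    (fun y hy => by rw [pderiv2_one_quadratic, h21 y hy]; ring)
  obtain ⟨c, hc⟩ := exists_eq_add_const_of_pderiv2_eq hUopen hUpre hq
    (differentiable_quadratic 0 0 l).differentiableOn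
    (fun y hy => by rw [pderiv2_zero_quadratic, h12 y hy]; ring)
    (fun y hy => by rw [pderiv2_one_quadratic, ← h1122 y hy, hl y hy]; ring)
  obtain ⟨d, hd⟩ := exists_eq_add_const_of_pderiv2_eq hUopen hUpre
    (hψ.differentiableOn two_ne_zero) (differentiable_quadratic (l / 2) b c).differentiableOn
    (fun y hy => by rw [pderiv2_zero_quadratic, hb y hy]; ring)
    (fun y hy => by rw [pderiv2_one_quadratic, hc y hy]; ring)
  exact ⟨l / 2, b, c, d, hd⟩
end

section
/- (Covariance of the discrete Bloch transform of an N-stationary field.) Let d ≥ 1, N ≥ 1, and let Ω be a set equipped with an additive action of ℤ^d, written z ↦ T_z with T₀ = id and T_{y+z} = T_y ∘ T_z. Let q : ℝ^d × Ω → ℂ^d be N-stationary, i.e. q(x+Nz, ω) = q(x, T_{Nz}ω) for all z ∈ ℤ^d. Let γ' ∈ ℝ^d, let γ ∈ (2π/N)·ℤ^d, set v(x,ω) := e^{i⟨γ',x⟩} q(x,ω), and define ṽ_γ(x,ω) := Σ_{z ∈ {0,…,N−1}^d} e^{−i⟨γ+γ',z⟩} v(x+z, T_{−z}ω). Then for every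 y ∈ ℤ^d, every x ∈ ℝ^d and every ω ∈ Ω: ṽ_γ(x+y, ω) = e^{i⟨γ+γ',y⟩} ṽ_γ(x, T_y ω). -/
open scoped BigOperators

/-- The discrete Bloch transform over the cell `{0,…,N−1}^d`:
`ṽ_γ(x,ω) = Σ_{z ∈ {0,…,N−1}^d} e^{−i⟨γtot,z⟩} v(x+z, T_{−z}ω)`. -/
noncomputable def discreteBloch {d N : ℕ} {Ω : Type*} (T : (Fin d → ℤ) → Ω → Ω)
    (v : (Fin d → ℝ) → Ω → (Fin d → ℂ)) (γtot : Fin d → ℝ)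
    (x : Fin d → ℝ) (ω : Ω) : Fin d → ℂ :=
  ∑ z : Fin d → Fin N,
    Complex.exp (-Complex.I * ((∑ i, γtot i * ((z i : ℕ) : ℝ) : ℝ) : ℂ)) •
      v (x + fun i => (((z i : ℕ) : ℝ))) (T (-fun i => ((z i : ℕ) : ℤ)) ω)

/-- The sum of an `N`-periodic function on `ℤ^d` over the cell `{0,…,N−1}^d` is invariant under
integer translations. -/
theorem sum_cell_add_eq_of_periodic {d N : ℕ} (hN : 1 ≤ N) {M : Type*} [AddCommMonoid M]
    (F : (Fin d → ℤ) → M)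
    (hF : ∀ z w : Fin d → ℤ, F (z + fun i => (N : ℤ) * w i) = F z) (y : Fin d → ℤ) :
    ∑ z : Fin d → Fin N, F ((fun i => ((z i : ℕ) : ℤ)) + y)
      = ∑ z : Fin d → Fin N, F (fun i => ((z i : ℕ) : ℤ)) := by
  have hN' : (0 : ℤ) < N := by exact_mod_cast hN
  have hnn (a : ℤ) : 0 ≤ a % N := Int.emod_nonneg a hN'.ne'
  have hlt (a : ℤ) : a % N < N := Int.emod_lt_of_pos a hN'
  let e : (Fin d → Fin N) → (Fin d → Fin N) := fun z i =>
    ⟨((((z i : ℕ) : ℤ) + y i) % N).toNat, by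
      have := hnn (((z i : ℕ) : ℤ) + y i)
      have := hlt (((z i : ℕ) : ℤ) + y i)
      omega⟩
  have he (z : Fin d → Fin N) (i : Fin d) :
      ((e z i : ℕ) : ℤ) = (((z i : ℕ) : ℤ) + y i) % N := Int.toNat_of_nonneg (hnn _)
  have hinj : Function.Injective e := by
    intro a b hab
    funext i
    have h : (((a i : ℕ) : ℤ) + y i) % N = (((b i : ℕ) : ℤ) + y i) % N := by
      rw [← he, ← he, hab]
    have h' : ((a i : ℕ) : ℤ) % N = ((b i : ℕ) : ℤ) % N := Int.ModEq.add_right_cancel' (y i) h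
    rw [Int.emod_eq_of_lt (by positivity) (by exact_mod_cast (a i).isLt),
      Int.emod_eq_of_lt (by positivity) (by exact_mod_cast (b i).isLt)] at h'
    exact Fin.ext (by exact_mod_cast h')
  refine Fintype.sum_bijective e (Finite.injective_iff_bijective.mp hinj) _ _ fun z => ?_
  rw [← hF (fun i => ((e z i : ℕ) : ℤ)) (fun i => (((z i : ℕ) : ℤ) + y i) / N)]
  congr 1
  funext i
  simp only [Pi.add_apply, he]
  exact (Int.emod_add_mul_ediv _ _).symm

theorem stmt_15 (d N : ℕ) (hd : 1 ≤ d) (hN : 1 ≤ N) (Ω : Type*)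
    (T : (Fin d → ℤ) → Ω → Ω)
    (hT0 : T 0 = id)
    (hTadd : ∀ y z : Fin d → ℤ, T (y + z) = T y ∘ T z)
    (q : (Fin d → ℝ) → Ω → (Fin d → ℂ))
    (hq : ∀ (x : Fin d → ℝ) (ω : Ω) (z : Fin d → ℤ),
      q (x + fun i => (N : ℝ) * (z i : ℝ)) ω = q x (T (fun i => (N : ℤ) * z i) ω))
    (γ' γ : Fin d → ℝ) (k : Fin d → ℤ)
    (hγ : ∀ i, γ i = 2 * Real.pi / N * (k i : ℝ))
    (v : (Fin d → ℝ) → Ω → (Fin d → ℂ))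
    (hv : ∀ (x : Fin d → ℝ) (ω : Ω),
      v x ω = Complex.exp (Complex.I * ((∑ i, γ' i * x i : ℝ) : ℂ)) • q x ω)
    (y : Fin d → ℤ) (x : Fin d → ℝ) (ω : Ω) :
    discreteBloch (N := N) T v (γ + γ') (x + fun i => ((y i : ℝ))) ω
      = Complex.exp (Complex.I * ((∑ i, (γ i + γ' i) * (y i : ℝ) : ℝ) : ℂ)) •
          discreteBloch (N := N) T v (γ + γ') x (T y ω) := by
  let F : (Fin d → ℤ) → (Fin d → ℂ) := fun z =>
    Complex.exp (-Complex.I * ((∑ i, (γ i + γ' i) * (z i : ℝ) : ℝ) : ℂ)) •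
      v (x + fun i => (z i : ℝ)) (T (-z) (T y ω))
  have hF (z w : Fin d → ℤ) : F (z + fun i => (N : ℤ) * w i) = F z := by
    have hT : T (fun i => (N : ℤ) * w i) (T (-(z + fun i => (N : ℤ) * w i)) (T y ω))
        = T (-z) (T y ω) := by
      rw [← Function.comp_apply (f := T _) (g := T _), ← hTadd]
      congr 2
      abel
    have hx : (x + fun i => ((z + fun i => (N : ℤ) * w i) i : ℝ))
        = (x + fun i => (z i : ℝ)) + fun i => (N : ℝ) * (w i : ℝ) := by
      funext i
      simp only [Pi.add_apply]
      push_cast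
      ring
    have hNR : (N : ℝ) ≠ 0 := by
      have : N ≠ 0 := by omega
      exact_mod_cast this
    simp only [F, hv]
    rw [hx, hq, hT, smul_smul, smul_smul, ← Complex.exp_add, ← Complex.exp_add]
    congr 1
    rw [Complex.exp_eq_exp_iff_exists_int]
    refine ⟨-∑ i, k i * w i, ?_⟩
    have key : -(∑ i, (γ i + γ' i) * (((z + fun i => (N : ℤ) * w i) i : ℤ) : ℝ))
          + ∑ i, γ' i * ((x + fun i => (z i : ℝ)) + fun i => (N : ℝ) * (w i : ℝ)) i
        = -(∑ i, (γ i + γ' i) * (z i : ℝ)) + ∑ i, γ' i * (x + fun i => (z i : ℝ)) i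
          + 2 * Real.pi * ((-∑ i, k i * w i : ℤ) : ℝ) := by
      push_cast
      simp only [mul_neg, Finset.mul_sum, ← Finset.sum_neg_distrib, ← Finset.sum_add_distrib]
      refine Finset.sum_congr rfl fun i _ => ?_
      simp only [Pi.add_apply, hγ]
      push_cast
      field_simp
      ring
    have keyC := congrArg (fun r : ℝ => Complex.I * (r : ℂ)) key
    simp only [Complex.ofReal_add, Complex.ofReal_neg, Complex.ofReal_mul, Complex.ofReal_intCast,
      Complex.ofReal_ofNat] at keyC
    linear_combination keyC
  have hsum := sum_cell_add_eq_of_periodic hN F hF y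
  have hR : discreteBloch (N := N) T v (γ + γ') x (T y ω)
      = ∑ z : Fin d → Fin N, F (fun i => ((z i : ℕ) : ℤ)) := by
    simp [discreteBloch, F]
  rw [hR, ← hsum, Finset.smul_sum, discreteBloch]
  refine Finset.sum_congr rfl fun z _ => ?_
  have hT : T (-((fun i => ((z i : ℕ) : ℤ)) + y)) (T y ω) = T (-fun i => ((z i : ℕ) : ℤ)) ω := by
    rw [← Function.comp_apply (f := T _) (g := T _), ← hTadd]
    congr 2
    abel
  have hx : (x + fun i => ((((fun i => ((z i : ℕ) : ℤ)) + y) i : ℤ) : ℝ))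
      = (x + fun i => (y i : ℝ)) + fun i => ((z i : ℕ) : ℝ) := by
    funext i
    simp only [Pi.add_apply]
    push_cast
    ring
  simp only [F]
  rw [hT, hx, smul_smul, ← Complex.exp_add]
  congr 2
  have key : -(∑ i, (γ + γ') i * ((z i : ℕ) : ℝ))
      = (∑ i, (γ i + γ' i) * (y i : ℝ))
        + -∑ i, (γ i + γ' i) * ((((fun i => ((z i : ℕ) : ℤ)) + y) i : ℤ) : ℝ) := by
    simp only [← Finset.sum_neg_distrib, ← Finset.sum_add_distrib]
    refine Finset.sum_congr rfl fun i _ => ?_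
    simp only [Pi.add_apply]
    push_cast
    ring
  have keyC := congrArg (fun r : ℝ => Complex.I * (r : ℂ)) key
  simp only [Complex.ofReal_add, Complex.ofReal_neg] at keyC
  linear_combination keyC
end
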